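/- Let f(p) = Σ_{m=0}^∞ pᵐ aₘ be an entire power series with quaternionic coefficients satisfying Σ_{m=0}^∞ m! |aₘ|² < ∞, and for q ∈ ℍ let k_q(p) = Σ_{n=0}^∞ pⁿ q̄ⁿ / n!. Then for every imaginary unit I ∈ 𝕊 and every q ∈ ℍ, ⟨f, k_q⟩_I = f(q); that is, k_q is a reproducing kernel for the slice hyperholomorphic quaternionic Fock space. -/

import Mathlib

open MeasureTheory Real Nat

noncomputable section

local notation "ℍ" => Quaternion ℝ

/-- The sphere of quaternionic imaginary units. -/
def quatSphere : Set ℍ := {q | q.re = 0 ∧ ‖q‖ = 1}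

/-- The point `x + y I` of the slice `ℂ_I`. -/
def sliceVal (I : ℍ) (z : ℝ × ℝ) : ℍ := ((z.1 : ℍ)) + ((z.2 : ℍ)) * I

/-- The Fock inner product `⟨f, g⟩_I = (1/π) ∫ e^{-(x²+y²)} conj(g(x+yI)) f(x+yI) dx dy`. -/
def fockInner (I : ℍ) (f g : ℍ → ℍ) : ℍ :=
  π⁻¹ • ∫ z : ℝ × ℝ,
    Real.exp (-(z.1 ^ 2 + z.2 ^ 2)) • (star (g (sliceVal I z)) * f (sliceVal I z))

/-- The reproducing kernel `k_q(p) = e_⋆^{p q̄} = Σ pⁿ q̄ⁿ / n!`. -/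
def fockKernel (q : ℍ) : ℍ → ℍ := fun p => ∑' n : ℕ, ((n ! : ℝ)⁻¹) • (p ^ n * (star q) ^ n)

/-!
On each slice the monomials are orthogonal for the Gaussian weight, because rotating the slice by a
suitable angle multiplies `conj z ^ n * z ^ m` by `-1` when `m ≠ n`. Coefficients on the left of
`conj z ^ n` and on the right of `z ^ m` are untouched by this, so noncommutativity does no harm.

Only one power series at a time is expanded under the integral. By Cauchy-Schwarz, a Fock series
satisfies `∑ ‖a m‖ r ^ m ≤ K * exp (r ^ 2 / 2)`, and so can be integrated termwise, against the
weight `exp (-r ^ 2)`, with any function of exponential type. Applied to the kernel paired with a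
monomial this gives `⟨p ^ m * b, k_q⟩ = q ^ m * b`; applied to `f` paired with the kernel, which is
itself of exponential type, it gives `⟨f, k_q⟩ = ∑ q ^ m * a m`.
-/

section GaussianIntegrals

open ComplexConjugate

lemma integrable_exp_mul_norm_sub_mul_norm_sq {V : Type*} [NormedAddCommGroup V]
    [InnerProductSpace ℝ V] [FiniteDimensional ℝ V] [MeasurableSpace V] [BorelSpace V]
    (c : ℝ) {b : ℝ} (hb : 0 < b) :
    Integrable fun v : V => Real.exp (c * ‖v‖ - b * ‖v‖ ^ 2) := by
  have gaussian : Integrable fun v : V => Real.exp (-(b / 2) * ‖v‖ ^ 2) := by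
    have hb' : 0 < ((b / 2 : ℝ) : ℂ).re := by simpa using hb
    simpa [Complex.norm_exp, ← Complex.ofReal_pow] using
      (GaussianFourier.integrable_cexp_neg_mul_sq_norm_add hb' 0 (0 : V)).norm
  refine (gaussian.const_mul (Real.exp (c ^ 2 / (2 * b)))).mono'
    (Continuous.aestronglyMeasurable (by fun_prop)) (.of_forall fun v => ?_)
  have complete_square : c ^ 2 / (2 * b) + -(b / 2) * ‖v‖ ^ 2 - (c * ‖v‖ - b * ‖v‖ ^ 2)
      = (c - b * ‖v‖) ^ 2 / (2 * b) := by
    field_simp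
    ring
  have : 0 ≤ (c - b * ‖v‖) ^ 2 / (2 * b) := by positivity
  rw [Real.norm_of_nonneg (Real.exp_pos _).le, ← Real.exp_add, Real.exp_le_exp]
  linarith

lemma pow_le_factorial_mul_exp {r : ℝ} (hr : 0 ≤ r) (n : ℕ) : r ^ n ≤ n ! * Real.exp r :=
  (div_le_iff₀' (by positivity)).1 (Real.pow_div_factorial_le_exp r hr n)

lemma integrable_exp_neg_norm_sq_smul_conj_pow_mul_pow (n m : ℕ) :
    Integrable fun z : ℂ => Real.exp (-‖z‖ ^ 2) • (conj z ^ n * z ^ m) := by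
  refine ((integrable_exp_mul_norm_sub_mul_norm_sq 1 one_pos).const_mul ((n + m)! : ℝ)).mono'
    (Continuous.aestronglyMeasurable (by fun_prop)) (.of_forall fun z => ?_)
  calc ‖Real.exp (-‖z‖ ^ 2) • (conj z ^ n * z ^ m)‖
      = ‖z‖ ^ (n + m) * Real.exp (-‖z‖ ^ 2) := by
        rw [norm_smul, norm_mul, norm_pow, norm_pow, RCLike.norm_conj,
          Real.norm_of_nonneg (Real.exp_pos _).le, pow_add, mul_comm]
    _ ≤ (n + m)! * Real.exp ‖z‖ * Real.exp (-‖z‖ ^ 2) := by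
        gcongr
        exact pow_le_factorial_mul_exp (norm_nonneg z) _
    _ = (n + m)! * Real.exp (1 * ‖z‖ - 1 * ‖z‖ ^ 2) := by
        rw [mul_assoc, ← Real.exp_add]
        ring_nf

lemma integral_norm_pow_mul_exp_neg_norm_sq (n : ℕ) :
    ∫ z : ℂ, ‖z‖ ^ (2 * n) * Real.exp (-‖z‖ ^ 2) = π * n ! := by
  have h := Complex.integral_rpow_mul_exp_neg_rpow (p := 2) (q := (2 * n : ℕ)) one_le_two
    (by linarith [Nat.cast_nonneg (α := ℝ) (2 * n)])
  simp only [Real.rpow_natCast, Real.rpow_two] at h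
  rw [h, ← Real.Gamma_nat_eq_factorial]
  push_cast
  ring_nf

lemma integral_eq_zero_of_rotation_eq_smul {E : Type*} [NormedAddCommGroup E] [NormedSpace ℂ E]
    {f : ℂ → E} {u : Circle} {c : ℂ} (hc : c ≠ 1) (hf : ∀ z, f (u * z) = c • f z) :
    ∫ z, f z = 0 := by
  have h : c • ∫ z, f z = ∫ z, f z := by
    rw [← integral_smul]
    simpa only [rotation_apply, hf] using (rotation u).measurePreserving.integral_comp
      (rotation u).toHomeomorph.measurableEmbedding f
  have : (c - 1) • ∫ z, f z = 0 := by rw [sub_smul, h, one_smul, sub_self]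
  exact (smul_eq_zero.1 this).resolve_left (sub_ne_zero.2 hc)

lemma conj_circleExp_pow_mul_pow (t : ℝ) (n m : ℕ) :
    conj (Circle.exp t : ℂ) ^ n * (Circle.exp t : ℂ) ^ m
      = Complex.exp ((m - n) * t * Complex.I) := by
  rw [Circle.coe_exp, ← Complex.exp_conj, ← Complex.exp_nat_mul, ← Complex.exp_nat_mul,
    ← Complex.exp_add, map_mul, Complex.conj_ofReal, Complex.conj_I]
  ring_nf

lemma integral_exp_neg_norm_sq_smul_conj_pow_mul_pow (n m : ℕ) :
    ∫ z : ℂ, Real.exp (-‖z‖ ^ 2) • (conj z ^ n * z ^ m)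
      = if m = n then ((π * n ! : ℝ) : ℂ) else 0 := by
  split_ifs with hmn
  · subst hmn
    rw [← integral_norm_pow_mul_exp_neg_norm_sq, ← integral_complex_ofReal]
    refine integral_congr_ae (.of_forall fun z => ?_)
    simp only [← mul_pow, Complex.conj_mul', Complex.real_smul]
    push_cast
    ring
  · have hne : (m : ℂ) - n ≠ 0 := sub_ne_zero.2 (by exact_mod_cast hmn)
    let u : Circle := Circle.exp (π / ((m : ℝ) - n))
    have hu : conj (u : ℂ) ^ n * (u : ℂ) ^ m = -1 := by
      rw [conj_circleExp_pow_mul_pow, ← Complex.exp_pi_mul_I]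
      push_cast
      rw [mul_div_cancel₀ _ hne]
    refine integral_eq_zero_of_rotation_eq_smul (u := u) (c := -1) (by norm_num) fun z => ?_
    rw [← hu, norm_mul, Circle.norm_coe, one_mul, map_mul, mul_pow, mul_pow, smul_comm, smul_eq_mul]
    ring_nf

end GaussianIntegrals

lemma hasSum_integral_of_sum_norm_le {α ι G : Type*} [MeasurableSpace α] {μ : Measure α}
    [Countable ι] [NormedAddCommGroup G] [NormedSpace ℝ G] {F : ι → α → G} {f : α → G}
    {bound : α → ℝ} (hF : ∀ i, AEStronglyMeasurable (F i) μ)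
    (h_le : ∀ s : Finset ι, ∀ᵐ x ∂μ, ∑ i ∈ s, ‖F i x‖ ≤ bound x) (h_bound : Integrable bound μ)
    (h_sum : ∀ᵐ x ∂μ, HasSum (fun i => F i x) (f x)) :
    HasSum (fun i => ∫ x, F i x ∂μ) (∫ x, f x ∂μ) := by
  have hF_int (i : ι) : Integrable (F i) μ :=
    h_bound.mono' (hF i) (by simpa only [Finset.sum_singleton] using h_le {i})
  have h_tendsto := tendsto_integral_filter_of_dominated_convergence bound
    (.of_forall fun s => Finset.aestronglyMeasurable_fun_sum s fun i _ => hF i)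
    (.of_forall fun s => (h_le s).mono fun x hx => (norm_sum_le s fun i => F i x).trans hx)
    h_bound h_sum
  simp only [integral_finsetSum _ fun i _ => hF_int i] at h_tendsto
  exact h_tendsto

lemma hasSum_pow_div_factorial (x : ℝ) : HasSum (fun n : ℕ => x ^ n / n !) (Real.exp x) :=
  Real.exp_eq_exp_ℝ ▸ NormedSpace.expSeries_div_hasSum_exp x

lemma sum_pow_mul_norm_le {E : Type*} [SeminormedAddCommGroup E] {a : ℕ → E}
    (ha : Summable fun m : ℕ => (m ! : ℝ) * ‖a m‖ ^ 2) (s : Finset ℕ) (r : ℝ) :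
    ∑ m ∈ s, r ^ m * ‖a m‖ ≤ √(∑' m : ℕ, (m ! : ℝ) * ‖a m‖ ^ 2) * Real.exp (r ^ 2 / 2) := by
  calc ∑ m ∈ s, r ^ m * ‖a m‖
      = ∑ m ∈ s, (√(m ! : ℝ) * ‖a m‖) * (r ^ m / √(m ! : ℝ)) :=
        Finset.sum_congr rfl fun m _ => by field_simp
    _ ≤ √(∑ m ∈ s, (√(m ! : ℝ) * ‖a m‖) ^ 2) * √(∑ m ∈ s, (r ^ m / √(m ! : ℝ)) ^ 2) :=
        Real.sum_mul_le_sqrt_mul_sqrt s _ _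
    _ = √(∑ m ∈ s, (m ! : ℝ) * ‖a m‖ ^ 2) * √(∑ m ∈ s, (r ^ 2) ^ m / m !) := by
        simp only [mul_pow, div_pow, Real.sq_sqrt (Nat.cast_nonneg _), ← pow_mul, mul_comm]
    _ ≤ √(∑' m : ℕ, (m ! : ℝ) * ‖a m‖ ^ 2) * √(Real.exp (r ^ 2)) := by
        gcongr
        · exact ha.sum_le_tsum s fun m _ => by positivity
        · exact sum_le_hasSum s (fun m _ => by positivity) (hasSum_pow_div_factorial (r ^ 2))
    _ = √(∑' m : ℕ, (m ! : ℝ) * ‖a m‖ ^ 2) * Real.exp (r ^ 2 / 2) := by rw [Real.exp_half]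

section Slice

open ComplexConjugate

variable {I : ℍ}

lemma mul_self_of_mem_quatSphere (hI : I ∈ quatSphere) : I * I = -1 := by
  rw [← sq, Quaternion.sq_eq_neg_normSq.2 hI.1, Quaternion.normSq_eq_norm_mul_self, hI.2]
  simp

/-- The embedding `x + iy ↦ x + yI` of `ℂ` onto the slice `ℂ_I`, as a map of real algebras. -/
def sliceHom (hI : I ∈ quatSphere) : ℂ →ₐ[ℝ] ℍ :=
  Complex.liftAux I (mul_self_of_mem_quatSphere hI)

lemma sliceHom_apply (hI : I ∈ quatSphere) (z : ℂ) : sliceHom hI z = sliceVal I (z.re, z.im) := by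
  rw [sliceHom, Complex.liftAux_apply, sliceVal, Quaternion.coe_mul_eq_smul]
  rfl

lemma star_sliceHom (hI : I ∈ quatSphere) (z : ℂ) :
    star (sliceHom hI z) = sliceHom hI (conj z) := by
  simp only [sliceHom_apply, sliceVal, Quaternion.coe_mul_eq_smul, star_add, Quaternion.star_coe,
    Quaternion.star_smul, Quaternion.star_eq_neg.2 hI.1, Complex.conj_re, Complex.conj_im,
    smul_neg, neg_smul]

lemma norm_sliceHom (hI : I ∈ quatSphere) (z : ℂ) : ‖sliceHom hI z‖ = ‖z‖ := by
  have h : (‖sliceHom hI z‖ ^ 2 : ℝ) = (‖z‖ ^ 2 : ℝ) := by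
    apply Quaternion.coe_injective
    rw [sq, ← Quaternion.normSq_eq_norm_mul_self, ← Quaternion.star_mul_self, star_sliceHom,
      ← map_mul, Complex.conj_mul', ← Complex.ofReal_pow]
    exact (sliceHom hI).commutes _
  exact (sq_eq_sq₀ (norm_nonneg _) (norm_nonneg _)).1 h

lemma continuous_sliceHom (hI : I ∈ quatSphere) : Continuous (sliceHom hI) :=
  (sliceHom hI).toLinearMap.continuous_of_finiteDimensional

lemma stronglyMeasurable_comp_sliceHom_of_hasSum (hI : I ∈ quatSphere) {f : ℍ → ℍ} {a : ℕ → ℍ}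
    (hf : ∀ p : ℍ, HasSum (fun m : ℕ => p ^ m * a m) (f p)) :
    StronglyMeasurable fun z : ℂ => f (sliceHom hI z) := by
  have := continuous_sliceHom hI
  exact stronglyMeasurable_of_tendsto Filter.atTop
    (fun s : Finset ℕ => Continuous.stronglyMeasurable
      (f := fun z => ∑ m ∈ s, sliceHom hI z ^ m * a m) (by fun_prop))
    (tendsto_pi_nhds.2 fun z => hf (sliceHom hI z))

lemma fockInner_eq_integral_complex (hI : I ∈ quatSphere) (f g : ℍ → ℍ) :
    fockInner I f g = π⁻¹ • ∫ z : ℂ,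
      Real.exp (-‖z‖ ^ 2) • (star (g (sliceHom hI z)) * f (sliceHom hI z)) := by
  rw [fockInner, ← Complex.volume_preserving_equiv_real_prod.integral_comp']
  simp only [sliceHom_apply, Complex.measurableEquivRealProd_apply, Complex.sq_norm,
    Complex.normSq_apply, ← sq]

lemma star_fockInner (I : ℍ) (f g : ℍ → ℍ) : star (fockInner I f g) = fockInner I g f := by
  have : StarModule ℝ ℍ := ⟨Quaternion.star_smul⟩
  rw [fockInner, fockInner, Quaternion.star_smul]
  congr 1
  refine ((starL' ℝ : ℍ ≃L[ℝ] ℍ).integral_comp_comm _).symm.trans ?_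
  simp only [starL'_apply, Quaternion.star_smul, star_mul, star_star]

lemma fockInner_monomial (hI : I ∈ quatSphere) (a b : ℍ) (m n : ℕ) :
    fockInner I (fun p => p ^ m * a) (fun p => p ^ n * b)
      = if m = n then (n ! : ℝ) • (star b * a) else 0 := by
  let L : ℂ →L[ℝ] ℍ := (ContinuousLinearMap.mulLeftRight ℝ ℍ (star b) a).comp
    (sliceHom hI).toLinearMap.toContinuousLinearMap
  have hL (w : ℂ) : L w = star b * sliceHom hI w * a := rfl
  have integrand_eq (z : ℂ) : Real.exp (-‖z‖ ^ 2) •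
      (star (sliceHom hI z ^ n * b) * (sliceHom hI z ^ m * a))
        = L (Real.exp (-‖z‖ ^ 2) • (conj z ^ n * z ^ m)) := by
    rw [L.map_smul, hL]
    simp only [map_mul, map_pow, star_mul, star_pow, star_sliceHom, mul_assoc]
  rw [fockInner_eq_integral_complex hI]
  simp only [integrand_eq]
  rw [L.integral_comp_comm (integrable_exp_neg_norm_sq_smul_conj_pow_mul_pow n m),
    integral_exp_neg_norm_sq_smul_conj_pow_mul_pow]
  split_ifs
  · have hφ : sliceHom hI ((π * n ! : ℝ) : ℂ) = ((π * n ! : ℝ) : ℍ) := (sliceHom hI).commutes _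
    rw [hL, hφ, Quaternion.mul_coe_eq_smul, smul_mul_assoc, smul_smul,
      inv_mul_cancel_left₀ Real.pi_ne_zero]
  · rw [map_zero, smul_zero]

end Slice

/-- Membership of `f` in the slice hyperholomorphic Fock space, witnessed by its power series
coefficients `a`. -/
structure HasFockSeries (f : ℍ → ℍ) (a : ℕ → ℍ) : Prop where
  hasSum : ∀ p : ℍ, HasSum (fun m : ℕ => p ^ m * a m) (f p)
  summable : Summable fun m : ℕ => (m ! : ℝ) * ‖a m‖ ^ 2

namespace HasFockSeries

variable {f : ℍ → ℍ} {a : ℕ → ℍ} {I : ℍ}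

lemma hasSum_fockInner (hf : HasFockSeries f a) (hI : I ∈ quatSphere) {g : ℍ → ℍ} {C Q : ℝ}
    (hg : StronglyMeasurable fun z : ℂ => g (sliceHom hI z))
    (hgC : ∀ p, ‖g p‖ ≤ C * Real.exp (Q * ‖p‖)) :
    HasSum (fun m : ℕ => fockInner I (fun p => p ^ m * a m) g) (fockInner I f g) := by
  simp only [fockInner_eq_integral_complex hI]
  set K := √(∑' m : ℕ, (m ! : ℝ) * ‖a m‖ ^ 2)
  have hcont := continuous_sliceHom hI
  refine (hasSum_integral_of_sum_norm_le
    (bound := fun z => C * K * Real.exp (Q * ‖z‖ - 1 / 2 * ‖z‖ ^ 2))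
    (fun m => ?measurable) (fun s => .of_forall fun z => ?bound)
    ((integrable_exp_mul_norm_sub_mul_norm_sq Q one_half_pos).const_mul _)
    (.of_forall fun z => ((hf.hasSum _).mul_left _).const_smul _)).const_smul _
  case measurable =>
    have hpow : Continuous fun z : ℂ => sliceHom hI z ^ m * a m := by fun_prop
    have hexp : Continuous fun z : ℂ => Real.exp (-‖z‖ ^ 2) := by fun_prop
    exact (hexp.stronglyMeasurable.smul
      (hg.star.mul hpow.stronglyMeasurable)).aestronglyMeasurable
  case bound =>
    calc ∑ m ∈ s, ‖Real.exp (-‖z‖ ^ 2) •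
          (star (g (sliceHom hI z)) * (sliceHom hI z ^ m * a m))‖
        = Real.exp (-‖z‖ ^ 2) * (‖g (sliceHom hI z)‖ * ∑ m ∈ s, ‖z‖ ^ m * ‖a m‖) := by
          simp only [norm_smul, norm_mul, norm_pow, Quaternion.norm_star, norm_sliceHom,
            Real.norm_of_nonneg (Real.exp_pos _).le, Finset.mul_sum]
      _ ≤ Real.exp (-‖z‖ ^ 2) * (C * Real.exp (Q * ‖z‖) * (K * Real.exp (‖z‖ ^ 2 / 2))) := by
          have hgz := hgC (sliceHom hI z)
          rw [norm_sliceHom] at hgz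
          gcongr
          · exact (norm_nonneg _).trans hgz
          · exact sum_pow_mul_norm_le hf.summable s ‖z‖
      _ = C * K * (Real.exp (-‖z‖ ^ 2) * Real.exp (Q * ‖z‖) * Real.exp (‖z‖ ^ 2 / 2)) := by ring
      _ = C * K * Real.exp (Q * ‖z‖ - 1 / 2 * ‖z‖ ^ 2) := by
          rw [← Real.exp_add, ← Real.exp_add]
          ring_nf

lemma fockInner_monomial_right (hf : HasFockSeries f a) (hI : I ∈ quatSphere) (b : ℍ) (n : ℕ) :
    fockInner I f (fun p => p ^ n * b) = (n ! : ℝ) • (star b * a n) := by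
  have hcont := continuous_sliceHom hI
  have exponential_type (p : ℍ) : ‖p ^ n * b‖ ≤ n ! * ‖b‖ * Real.exp (1 * ‖p‖) := by
    rw [norm_mul, norm_pow, one_mul, mul_right_comm]
    gcongr
    exact pow_le_factorial_mul_exp (norm_nonneg p) n
  refine (hf.hasSum_fockInner hI (Continuous.stronglyMeasurable (by fun_prop))
    exponential_type).unique ?_
  simp only [fockInner_monomial hI]
  convert hasSum_ite_eq n ((n ! : ℝ) • (star b * a n)) using 3 with m hm
  rw [hm]

lemma fockInner_monomial_left (hf : HasFockSeries f a) (hI : I ∈ quatSphere) (b : ℍ) (n : ℕ) :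
    fockInner I (fun p => p ^ n * b) f = (n ! : ℝ) • (star (a n) * b) := by
  rw [← star_fockInner, hf.fockInner_monomial_right hI, Quaternion.star_smul, star_mul, star_star]

end HasFockSeries

lemma norm_fockKernel_term (q p : ℍ) (n : ℕ) :
    ‖(n ! : ℝ)⁻¹ • (p ^ n * star q ^ n)‖ = (‖q‖ * ‖p‖) ^ n / n ! := by
  rw [norm_smul, norm_inv, Real.norm_natCast, norm_mul, norm_pow, norm_pow, Quaternion.norm_star,
    ← mul_pow, mul_comm ‖p‖, inv_mul_eq_div]

lemma norm_fockKernel_le (q p : ℍ) : ‖fockKernel q p‖ ≤ Real.exp (‖q‖ * ‖p‖) :=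
  tsum_of_norm_bounded (hasSum_pow_div_factorial _) fun n => (norm_fockKernel_term q p n).le

lemma hasFockSeries_fockKernel (q : ℍ) :
    HasFockSeries (fockKernel q) fun n => (n ! : ℝ)⁻¹ • star q ^ n where
  hasSum p := by
    simp only [mul_smul_comm]
    exact (Summable.of_norm_bounded (hasSum_pow_div_factorial _).summable
      fun n => (norm_fockKernel_term q p n).le).hasSum
  summable := by
    refine (hasSum_pow_div_factorial (‖q‖ ^ 2)).summable.congr fun n => ?_
    rw [norm_smul, norm_inv, Real.norm_natCast, norm_pow, Quaternion.norm_star, pow_right_comm]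
    field_simp

lemma fockInner_monomial_fockKernel {I : ℍ} (hI : I ∈ quatSphere) (b q : ℍ) (m : ℕ) :
    fockInner I (fun p => p ^ m * b) (fockKernel q) = q ^ m * b := by
  rw [(hasFockSeries_fockKernel q).fockInner_monomial_left hI, Quaternion.star_smul, star_pow,
    star_star, smul_mul_assoc, smul_inv_smul₀ (by positivity)]

theorem fockKernel_reproducing (f : ℍ → ℍ) (a : ℕ → ℍ)
    (hf : ∀ p : ℍ, HasSum (fun m : ℕ => p ^ m * a m) (f p))
    (ha : Summable fun m : ℕ => (m ! : ℝ) * ‖a m‖ ^ 2)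
    (I : ℍ) (hI : I ∈ quatSphere) (q : ℍ) :
    fockInner I f (fockKernel q) = f q := by
  have hk_meas : StronglyMeasurable fun z : ℂ => fockKernel q (sliceHom hI z) :=
    stronglyMeasurable_comp_sliceHom_of_hasSum hI (hasFockSeries_fockKernel q).hasSum
  have expansion : HasSum (fun m => fockInner I (fun p => p ^ m * a m) (fockKernel q))
      (fockInner I f (fockKernel q)) :=
    HasFockSeries.hasSum_fockInner ⟨hf, ha⟩ hI hk_meas
      (C := 1) (Q := ‖q‖) fun p => (norm_fockKernel_le q p).trans_eq (one_mul _).symm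
  simp only [fockInner_monomial_fockKernel hI] at expansion
  exact expansion.unique (hf q)
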